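/- The generalized hypergeometric series ₃F₂(1/2, 1/2, 1/2; 3/2, 3/2; 1/4) equals (1/(2√3))·ψ′(1/3) − π²/(3√3), where ψ′(1/3) = 9·∑_{k≥0} 1/(3k+1)². Concretely, the sum over n ≥ 0 of ((1/2)ₙ)³ / (((3/2)ₙ)² · n!) · (1/4)ⁿ equals (9/(2√3))·∑_{k≥0} 1/(3k+1)² − π²/(3√3). -/

import Mathlib

/-!
Since `(1/2)ₙ / n!` are the coefficients of `1 / √(1 - t)`, integrating the series of `arcsin t / t`
from `0` to `sin x` and substituting `t = sin u` gives, for `0 ≤ x ≤ π / 2`,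
`₃F₂(1/2, 1/2, 1/2; 3/2, 3/2; sin² x) * sin x = ∫₀ˣ u cot u du = x log (2 sin x) - I(x)`, where
`I(x) = ∫₀ˣ log (2 sin u) du`. Moreover `I(x) = -Cl₂(2x) / 2`, where `Cl₂(θ) = ∑ sin (nθ) / n²`:
integrate the real part of the Taylor series of `-log (1 - r exp (iu))` termwise and let `r → 1⁻`.
At `x = π / 6` the logarithm vanishes, so the value is `Cl₂(π/3)`, which the duplication formula
turns into `3/2 * Cl₂(2π/3)`. The numbers `sin (2πn/3)` have period `3` in `n`, and `ζ(2) = π² / 6`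
eliminates the terms with `n ≡ 2 mod 3`.
-/

open Real

/-- The Pochhammer symbol (shifted factorial) `(a)ₙ` for a real number `a`. -/
noncomputable def poch (a : ℝ) (n : ℕ) : ℝ := Polynomial.eval a (ascPochhammer ℝ n)

open Filter MeasureTheory Set Topology

lemma poch_zero (a : ℝ) : poch a 0 = 1 := by
  simp [poch]

lemma poch_succ (a : ℝ) (n : ℕ) : poch a (n + 1) = poch a n * (a + n) :=
  ascPochhammer_succ_eval n a

lemma poch_pos {a : ℝ} (ha : 0 < a) (n : ℕ) : 0 < poch a n :=
  ascPochhammer_pos n a ha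

lemma mul_poch_add_one (a : ℝ) (n : ℕ) : a * poch (a + 1) n = poch a n * (a + n) := by
  rw [← poch_succ]
  simp [poch, ascPochhammer_succ_left, Polynomial.eval_comp]

lemma poch_le_factorial {a : ℝ} (h₀ : 0 ≤ a) (h₁ : a ≤ 1) (n : ℕ) : poch a n ≤ n.factorial := by
  induction n with
  | zero => simp [poch_zero]
  | succ n ih =>
    rw [poch_succ, Nat.factorial_succ, mul_comm (n + 1), Nat.cast_mul]
    refine mul_le_mul ih ?_ (by positivity) (by positivity)
    push_cast
    linarith

lemma poch_div_factorial_eq_choose (a : ℝ) (n : ℕ) :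
    poch a n / n.factorial = Ring.choose (a + n - 1) n := by
  have h := Ring.factorial_nsmul_multichoose_eq_ascPochhammer a n
  rw [nsmul_eq_mul, Polynomial.ascPochhammer_smeval_eq_eval] at h
  rw [Ring.choose, poch, ← h, mul_div_cancel_left₀ _ (by positivity)]
  congr 1
  ring

lemma hasSum_poch_div_factorial_mul_pow (a : ℝ) {x : ℝ} (hx : |x| < 1) :
    HasSum (fun n : ℕ ↦ poch a n / n.factorial * x ^ n) (1 / (1 - x) ^ a) := by
  have hmem : x ∈ Metric.eball (0 : ℝ) 1 := by
    simpa [enorm_eq_nnnorm, ← NNReal.coe_lt_coe] using hx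
  simpa [FormalMultilinearSeries.ofScalars_apply_eq, poch_div_factorial_eq_choose, mul_comm]
    using (one_div_one_sub_rpow_hasFPowerSeriesOnBall_zero a).hasSum hmem

lemma hasDerivAt_tsum_mul_pow_div {c : ℕ → ℝ} {C : ℝ} (hc : ∀ n, |c n| ≤ C) {e : ℕ → ℕ}
    (he : ∀ n, n ≤ e n) {x : ℝ} (hx : |x| < 1) :
    HasDerivAt (fun y ↦ ∑' n, c n * y ^ (e n + 1) / (e n + 1)) (∑' n, c n * x ^ e n) x := by
  obtain ⟨r, hxr, hr₁⟩ := exists_between hx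
  have hr₀ : 0 < r := (abs_nonneg x).trans_lt hxr
  have hC : 0 ≤ C := (abs_nonneg _).trans (hc 0)
  refine hasDerivAt_tsum_of_isPreconnected
    (g := fun n y ↦ c n * y ^ (e n + 1) / (e n + 1)) (g' := fun n y ↦ c n * y ^ e n)
    ((summable_geometric_of_lt_one hr₀.le hr₁).mul_left C) isOpen_Ioo isPreconnected_Ioo
    (fun n y _ ↦ ?_) (fun n y hy ↦ ?_) (y₀ := 0) ⟨neg_lt_zero.2 hr₀, hr₀⟩ (by simp) (abs_lt.1 hxr)
  · have h := ((hasDerivAt_pow (e n + 1) y).const_mul (c n)).div_const ((e n : ℝ) + 1)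
    convert! h using 1
    have : (e n : ℝ) + 1 ≠ 0 := by positivity
    push_cast
    field_simp
  · calc ‖c n * y ^ e n‖ = |c n| * |y| ^ e n := by simp
      _ ≤ C * r ^ e n := by
        gcongr
        exacts [hc n, (abs_lt.2 hy).le]
      _ ≤ C * r ^ n := by
        gcongr 1
        exact pow_le_pow_of_le_one hr₀.le hr₁.le (he n)

/-- The coefficient of `x ^ (2 * n + 1)` in the Maclaurin series of `arcsin`. Dividing it once
more by `2 * n + 1` yields the coefficients of the hypergeometric series. -/
noncomputable def arcsinCoeff (n : ℕ) : ℝ := poch (1 / 2) n / n.factorial / (2 * n + 1)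

lemma arcsinCoeff_pos (n : ℕ) : 0 < arcsinCoeff n := by
  have := poch_pos one_half_pos n
  unfold arcsinCoeff
  positivity

lemma arcsinCoeff_le (n : ℕ) : arcsinCoeff n ≤ 1 / (n + 1) := by
  have hle := poch_le_factorial one_half_pos.le one_half_lt_one.le n
  unfold arcsinCoeff
  gcongr
  · exact div_le_one_of_le₀ hle (by positivity)
  · linarith

lemma abs_arcsinCoeff_le_one (n : ℕ) : |arcsinCoeff n| ≤ 1 := by
  rw [abs_of_pos (arcsinCoeff_pos n)]
  exact (arcsinCoeff_le n).trans (div_le_one_of_le₀ (by simp) (by positivity))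

lemma hasDerivAt_tsum_arcsinCoeff_mul_pow {x : ℝ} (hx : |x| < 1) :
    HasDerivAt (fun y ↦ ∑' n, arcsinCoeff n * y ^ (2 * n + 1)) (1 / √(1 - x ^ 2)) x := by
  have hbound (n : ℕ) : |poch (1 / 2) n / n.factorial| ≤ 1 := by
    rw [abs_of_pos (div_pos (poch_pos one_half_pos n) (by positivity))]
    exact div_le_one_of_le₀ (poch_le_factorial one_half_pos.le one_half_lt_one.le n) (by positivity)
  have hsum := hasSum_poch_div_factorial_mul_pow (1 / 2) (x := x ^ 2)
    (by rw [abs_pow]; exact pow_lt_one₀ (abs_nonneg x) hx two_ne_zero)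
  have h := hasDerivAt_tsum_mul_pow_div hbound (e := fun n ↦ 2 * n) (fun n ↦ by lia) hx
  simp only [pow_mul, hsum.tsum_eq, ← sqrt_eq_rpow] at h
  simpa [arcsinCoeff, pow_mul, pow_succ, div_mul_eq_mul_div] using h

lemma tsum_arcsinCoeff_mul_pow {x : ℝ} (hx : |x| < 1) :
    ∑' n, arcsinCoeff n * x ^ (2 * n + 1) = arcsin x := by
  have hseries {y : ℝ} (hy : y ∈ Ioo (-1) 1) := hasDerivAt_tsum_arcsinCoeff_mul_pow (abs_lt.2 hy)
  have harcsin {y : ℝ} (hy : y ∈ Ioo (-1) 1) := hasDerivAt_arcsin hy.1.ne' hy.2.ne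
  refine isOpen_Ioo.eqOn_of_deriv_eq isPreconnected_Ioo
    (fun y hy ↦ (hseries hy).differentiableAt.differentiableWithinAt)
    (fun y hy ↦ (harcsin hy).differentiableAt.differentiableWithinAt)
    (fun y hy ↦ (hseries hy).deriv.trans (harcsin hy).deriv.symm)
    (x := 0) (by simp) (by simp) (abs_lt.1 hx)

lemma hasDerivAt_tsum_arcsinCoeff_mul_pow_div {x : ℝ} (hx₀ : x ≠ 0) (hx : |x| < 1) :
    HasDerivAt (fun y ↦ ∑' n, arcsinCoeff n * y ^ (2 * n + 1) / (2 * n + 1))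
      (arcsin x / x) x := by
  have hsum : ∑' n, arcsinCoeff n * x ^ (2 * n) = arcsin x / x := by
    rw [eq_div_iff hx₀, ← tsum_mul_right, ← tsum_arcsinCoeff_mul_pow hx]
    exact tsum_congr fun n ↦ by ring
  have h := hasDerivAt_tsum_mul_pow_div abs_arcsinCoeff_le_one (e := fun n ↦ 2 * n)
    (fun n ↦ by lia) hx
  simpa [hsum] using h

lemma continuousOn_tsum_arcsinCoeff_mul_pow_div :
    ContinuousOn (fun y ↦ ∑' n, arcsinCoeff n * y ^ (2 * n + 1) / (2 * n + 1))
      (Icc (-1 : ℝ) 1) := by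
  have hsummable : Summable fun n : ℕ ↦ 1 / ((n + 1 : ℕ) : ℝ) ^ 2 :=
    (summable_nat_add_iff 1).2 (summable_one_div_nat_pow.2 one_lt_two)
  refine continuousOn_tsum (fun n ↦ by fun_prop) hsummable fun n y hy ↦ ?_
  calc ‖arcsinCoeff n * y ^ (2 * n + 1) / (2 * n + 1)‖
      = arcsinCoeff n * |y| ^ (2 * n + 1) / (2 * n + 1) := by
        have : (0 : ℝ) ≤ 2 * n + 1 := by positivity
        simp [abs_of_pos (arcsinCoeff_pos n), abs_of_nonneg this]
    _ ≤ 1 / (n + 1) * 1 / (n + 1) := by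
        gcongr
        · exact arcsinCoeff_le n
        · exact pow_le_one₀ (abs_nonneg y) (abs_le.2 hy)
        · linarith
    _ = 1 / ((n + 1 : ℕ) : ℝ) ^ 2 := by
        push_cast
        field_simp

lemma sinc_pos {x : ℝ} (hx : |x| < π) : 0 < sinc x := by
  have hsinc_abs : sinc |x| = sinc x := by
    rcases abs_choice x with h | h <;> simp [h]
  rcases eq_or_ne x 0 with rfl | hx₀
  · simp
  · rw [← hsinc_abs, sinc_of_ne_zero (abs_ne_zero.2 hx₀)]
    exact div_pos (sin_pos_of_pos_of_lt_pi (abs_pos.2 hx₀) hx) (abs_pos.2 hx₀)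

lemma continuousOn_mul_log_two_mul_sin :
    ContinuousOn (fun x ↦ x * log (2 * sin x)) (Ioo (-π) π) := by
  -- At `0`, continuity comes from that of `y ↦ y * log y`.
  have hquot : ContinuousOn (fun x ↦ (2 * sin x) * log (2 * sin x) / (2 * sinc x)) (Ioo (-π) π) :=
    (continuous_mul_log.comp (by fun_prop : Continuous fun x ↦ 2 * sin x)).continuousOn.div
      (by fun_prop) fun x hx ↦ (mul_pos two_pos (sinc_pos (abs_lt.2 hx))).ne'
  refine hquot.congr fun x hx ↦ ?_
  have hsinc := sinc_pos (abs_lt.2 hx)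
  rcases eq_or_ne x 0 with rfl | hx₀
  · simp
  · have hsin : sin x = x * sinc x := by
      rw [sinc_of_ne_zero hx₀, mul_div_cancel₀ _ hx₀]
    beta_reduce
    generalize log (2 * sin x) = l
    rw [hsin]
    field_simp

lemma intervalIntegrable_log_two_mul_sin (a b : ℝ) :
    IntervalIntegrable (fun u ↦ log (2 * sin u)) volume a b :=
  (analyticOnNhd_const.mul analyticOnNhd_sin).meromorphicOn.intervalIntegrable_log

lemma tsum_arcsinCoeff_mul_sin_pow_div {x : ℝ} (h₀ : 0 ≤ x) (h₁ : x ≤ π / 2) :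
    ∑' n, arcsinCoeff n * sin x ^ (2 * n + 1) / (2 * n + 1) =
      x * log (2 * sin x) - ∫ u in 0..x, log (2 * sin u) := by
  have hcont : ContinuousOn (fun u ↦ u * log (2 * sin u) -
      ∑' n, arcsinCoeff n * sin u ^ (2 * n + 1) / (2 * n + 1)) (Icc 0 x) := by
    refine (continuousOn_mul_log_two_mul_sin.mono ?_).sub
      (continuousOn_tsum_arcsinCoeff_mul_pow_div.comp continuousOn_sin fun u _ ↦ sin_mem_Icc u)
    exact Icc_subset_Ioo (by linarith [pi_pos]) (by linarith [pi_pos])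
  have hderiv (u : ℝ) (hu : u ∈ Ioo 0 x) : HasDerivAt (fun u ↦ u * log (2 * sin u) -
      ∑' n, arcsinCoeff n * sin u ^ (2 * n + 1) / (2 * n + 1)) (log (2 * sin u)) u := by
    have hsin : 0 < sin u := sin_pos_of_pos_of_lt_pi hu.1 (by linarith [hu.2, pi_pos])
    have hsin_lt : |sin u| < 1 := by
      rw [abs_of_pos hsin, ← sin_pi_div_two]
      exact sin_lt_sin_of_lt_of_le_pi_div_two (by linarith [hu.1, pi_pos]) le_rfl (hu.2.trans_le h₁)
    have hmul_log := (hasDerivAt_id u).mul (((hasDerivAt_sin u).const_mul 2).log (by positivity))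
    have hseries := (hasDerivAt_tsum_arcsinCoeff_mul_pow_div hsin.ne' hsin_lt).comp u
      (hasDerivAt_sin u)
    rw [arcsin_sin (by linarith [hu.1, pi_pos]) (by linarith [hu.2])] at hseries
    convert! hmul_log.sub hseries using 1
    simp only [id]
    field_simp
    ring
  have hftc := intervalIntegral.integral_eq_sub_of_hasDerivAt_of_le h₀ hcont hderiv
    (intervalIntegrable_log_two_mul_sin 0 x)
  have hzero : ∑' n, arcsinCoeff n * sin 0 ^ (2 * n + 1) / (2 * n + 1) = 0 := by simp
  rw [hzero, zero_mul, sub_zero, sub_zero] at hftc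
  linarith

/-- The Clausen function `Cl₂`, in terms of which the integral of `log (2 * sin u)` is expressed.
The sum may start at `n = 0`, since `0 / 0 = 0`. -/
noncomputable def clausen (θ : ℝ) : ℝ := ∑' n : ℕ, sin (n * θ) / n ^ 2

lemma norm_sin_div_sq_le (n : ℕ) (x : ℝ) : ‖sin x / n ^ 2‖ ≤ 1 / (n : ℝ) ^ 2 := by
  rw [norm_div, norm_eq_abs, norm_pow, norm_natCast]
  gcongr
  exact abs_sin_le_one x

lemma summable_sin_div_sq (x : ℕ → ℝ) : Summable fun n : ℕ ↦ sin (x n) / n ^ 2 :=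
  .of_norm_bounded (summable_one_div_nat_pow.2 one_lt_two) fun n ↦ norm_sin_div_sq_le n (x n)

lemma hasSum_pow_mul_cos_div {r : ℝ} (hr : |r| < 1) (u : ℝ) :
    HasSum (fun n : ℕ ↦ r ^ n * cos (n * u) / n)
      (-log ‖1 - r * Complex.exp (Complex.I * u)‖) := by
  have hz : ‖r * Complex.exp (Complex.I * u)‖ < 1 := by simpa using hr
  convert! Complex.hasSum_re (Complex.hasSum_taylorSeries_neg_log hz) using 1
  · ext n
    have hexp : Complex.exp (Complex.I * u) ^ n = Complex.exp ((n * u : ℝ) * Complex.I) := by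
      rw [← Complex.exp_nat_mul]
      push_cast
      ring_nf
    rw [mul_pow, hexp, Complex.div_natCast_re, ← Complex.ofReal_pow, Complex.re_ofReal_mul,
      Complex.exp_ofReal_mul_I_re]
  · rw [Complex.neg_re, Complex.log_re]

lemma integral_cos_natCast_mul_div (n : ℕ) (θ : ℝ) :
    ∫ u in 0..θ, cos (n * u) / n = sin (n * θ) / n ^ 2 := by
  rcases eq_or_ne n 0 with rfl | hn
  · simp
  · have : (n : ℝ) ≠ 0 := Nat.cast_ne_zero.2 hn
    rw [intervalIntegral.integral_div, intervalIntegral.integral_comp_mul_left _ this]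
    rw [integral_cos, mul_zero, sin_zero, sub_zero, smul_eq_mul]
    field_simp

lemma tsum_pow_mul_sin_div_sq {r : ℝ} (hr : |r| < 1) (θ : ℝ) :
    ∑' n : ℕ, r ^ n * (sin (n * θ) / n ^ 2) =
      -∫ u in 0..θ, log ‖1 - r * Complex.exp (Complex.I * u)‖ := by
  have hbound (n : ℕ) (u : ℝ) : ‖r ^ n * cos (n * u) / n‖ ≤ |r| ^ n := by
    rcases eq_or_ne n 0 with rfl | hn
    · simp
    · rw [norm_div, norm_mul, norm_pow, norm_natCast, norm_eq_abs, norm_eq_abs]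
      have hn₁ : (1 : ℝ) ≤ n := by exact_mod_cast Nat.one_le_iff_ne_zero.2 hn
      exact div_le_of_le_mul₀ (by positivity) (by positivity)
        (mul_le_mul_of_nonneg_left ((abs_cos_le_one _).trans hn₁) (by positivity))
  have h := intervalIntegral.hasSum_integral_of_dominated_convergence
    (μ := volume) (a := 0) (b := θ) (fun n _ ↦ |r| ^ n)
    (fun n ↦ (by fun_prop : Continuous _).aestronglyMeasurable)
    (fun n ↦ .of_forall fun u _ ↦ hbound n u)
    (.of_forall fun _ _ ↦ summable_geometric_of_lt_one (abs_nonneg r) hr)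
    intervalIntegrable_const (.of_forall fun u _ ↦ hasSum_pow_mul_cos_div hr u)
  simp_rw [mul_div_assoc, intervalIntegral.integral_const_mul, integral_cos_natCast_mul_div,
    intervalIntegral.integral_neg] at h
  exact h.tsum_eq

lemma tendsto_tsum_pow_mul_sin_div_sq (θ : ℝ) :
    Tendsto (fun r : ℝ ↦ ∑' n : ℕ, r ^ n * (sin (n * θ) / n ^ 2)) (𝓝[<] 1) (𝓝 (clausen θ)) := by
  refine tendsto_tsum_of_dominated_convergence (summable_one_div_nat_pow.2 one_lt_two)
    (fun n ↦ ?_) ?_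
  · have : Continuous fun r : ℝ ↦ r ^ n * (sin (n * θ) / n ^ 2) := by fun_prop
    simpa using (this.tendsto 1).mono_left nhdsWithin_le_nhds
  · filter_upwards [Ioo_mem_nhdsLT (zero_lt_one' ℝ)] with r hr n
    rw [norm_mul, norm_pow, norm_of_nonneg hr.1.le]
    exact (mul_le_of_le_one_left (norm_nonneg _) (pow_le_one₀ hr.1.le hr.2.le)).trans
      (norm_sin_div_sq_le n _)

lemma ae_sin_half_ne_zero : ∀ᵐ u : ℝ, sin (u / 2) ≠ 0 := by
  have hcount : {u : ℝ | sin (u / 2) = 0}.Countable := by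
    refine (countable_range fun n : ℤ ↦ n * π * 2).mono fun u hu ↦ ?_
    obtain ⟨n, hn⟩ := sin_eq_zero_iff.1 hu
    exact ⟨n, by simp only [hn]; ring⟩
  exact hcount.ae_notMem volume

lemma norm_one_sub_exp_I_mul (u : ℝ) : ‖1 - Complex.exp (Complex.I * u)‖ = |2 * sin (u / 2)| := by
  rw [norm_sub_rev, Complex.norm_exp_I_mul_ofReal_sub_one, norm_eq_abs]

-- This bounds `‖1 - r * exp (iu)‖` below uniformly in `r`, so that its logarithm is dominated.
lemma norm_sub_le_two_mul_norm_sub_smul {E : Type*} [SeminormedAddCommGroup E] [NormedSpace ℝ E]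
    {x y : E} (hxy : ‖x‖ = ‖y‖) {r : ℝ} (hr₀ : 0 ≤ r) (hr₁ : r ≤ 1) :
    ‖x - y‖ ≤ 2 * ‖x - r • y‖ := by
  have hgap : ‖(1 - r) • y‖ ≤ ‖x - r • y‖ := by
    calc ‖(1 - r) • y‖ = ‖x‖ - ‖r • y‖ := by
          rw [norm_smul, norm_smul, norm_of_nonneg hr₀, norm_of_nonneg (sub_nonneg.2 hr₁), hxy]
          ring
      _ ≤ ‖x - r • y‖ := norm_sub_norm_le _ _
  calc ‖x - y‖ = ‖(x - r • y) - (1 - r) • y‖ := by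
        congr 1
        module
    _ ≤ ‖x - r • y‖ + ‖(1 - r) • y‖ := norm_sub_le _ _
    _ ≤ 2 * ‖x - r • y‖ := by linarith

lemma abs_log_norm_one_sub_mul_exp_le {r u : ℝ} (hr₀ : 0 ≤ r) (hr₁ : r ≤ 1)
    (hu : sin (u / 2) ≠ 0) :
    |log ‖1 - r * Complex.exp (Complex.I * u)‖| ≤ |log (sin (u / 2))| + |log 2| := by
  have hlower : |sin (u / 2)| ≤ ‖1 - r * Complex.exp (Complex.I * u)‖ := by
    have h := norm_sub_le_two_mul_norm_sub_smul (x := 1) (y := Complex.exp (Complex.I * u))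
      (by simp) hr₀ hr₁
    rw [norm_one_sub_exp_I_mul, abs_mul, abs_two, Complex.real_smul] at h
    linarith
  have hupper : ‖1 - r * Complex.exp (Complex.I * u)‖ ≤ 2 := by
    refine (norm_sub_le _ _).trans ?_
    rw [norm_one, norm_mul, Complex.norm_exp_I_mul_ofReal, Complex.norm_of_nonneg hr₀]
    linarith
  have hpos := abs_pos.2 hu
  rw [← log_abs (sin (u / 2))]
  exact (abs_le_max_abs_abs (log_le_log hpos hlower)
    (log_le_log (hpos.trans_le hlower) hupper)).trans
    (max_le_add_of_nonneg (abs_nonneg _) (abs_nonneg _))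

lemma tendsto_integral_log_norm_one_sub_mul_exp (θ : ℝ) :
    Tendsto (fun r : ℝ ↦ ∫ u in 0..θ, log ‖1 - r * Complex.exp (Complex.I * u)‖) (𝓝[<] 1)
      (𝓝 (∫ u in 0..θ, log (2 * sin (u / 2)))) := by
  have hint : IntervalIntegrable (fun u ↦ log (sin (u / 2))) volume 0 θ :=
    MeromorphicOn.intervalIntegrable_log fun u _ ↦
      (by fun_prop : AnalyticAt ℝ (fun u ↦ sin (u / 2)) u).meromorphicAt
  refine intervalIntegral.tendsto_integral_filter_of_dominated_convergence
    (fun u ↦ |log (sin (u / 2))| + |log 2|) (.of_forall fun r ↦ ?_) ?_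
    (hint.abs.add intervalIntegrable_const) ?_
  · exact (by fun_prop : Measurable fun u : ℝ ↦
      log ‖1 - r * Complex.exp (Complex.I * u)‖).aestronglyMeasurable
  · filter_upwards [Ioo_mem_nhdsLT (zero_lt_one' ℝ)] with r hr
    filter_upwards [ae_sin_half_ne_zero] with u hu _
    exact abs_log_norm_one_sub_mul_exp_le hr.1.le hr.2.le hu
  · filter_upwards [ae_sin_half_ne_zero] with u hu _
    have hcont : Continuous fun r : ℝ ↦ ‖1 - r * Complex.exp (Complex.I * u)‖ := by fun_prop
    have hlim := hcont.tendsto 1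
    rw [Complex.ofReal_one, one_mul, norm_one_sub_exp_I_mul] at hlim
    rw [← log_abs (2 * sin (u / 2))]
    exact (hlim.log (by simpa using hu)).mono_left nhdsWithin_le_nhds

lemma clausen_eq_neg_integral (θ : ℝ) : clausen θ = -∫ u in 0..θ, log (2 * sin (u / 2)) := by
  refine tendsto_nhds_unique ((tendsto_tsum_pow_mul_sin_div_sq θ).congr' ?_)
    (tendsto_integral_log_norm_one_sub_mul_exp θ).neg
  filter_upwards [Ioo_mem_nhdsLT (by norm_num : (-1 : ℝ) < 1)] with r hr
  exact tsum_pow_mul_sin_div_sq (abs_lt.2 hr) θ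

lemma clausen_two_mul_eq_neg_integral (x : ℝ) :
    clausen (2 * x) = -(2 * ∫ u in 0..x, log (2 * sin u)) := by
  rw [clausen_eq_neg_integral, intervalIntegral.integral_comp_div (fun u ↦ log (2 * sin u))
    two_ne_zero, zero_div, mul_div_cancel_left₀ x two_ne_zero, smul_eq_mul]

lemma clausen_sub_clausen_pi_sub (θ : ℝ) :
    clausen θ - clausen (π - θ) = clausen (2 * θ) / 2 := by
  have hterm (n : ℕ) : sin (n * θ) / n ^ 2 - sin (n * (π - θ)) / n ^ 2 =
      (1 + (-1) ^ n) * (sin (n * θ) / n ^ 2) := by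
    rw [mul_sub, sin_nat_mul_pi_sub]
    ring
  rw [clausen, clausen, ← (summable_sin_div_sq _).tsum_sub (summable_sin_div_sq _),
    tsum_congr hterm, ← (mul_right_injective₀ (two_ne_zero' ℕ)).tsum_eq, clausen, ← tsum_div_const]
  · refine tsum_congr fun k ↦ ?_
    rw [pow_mul, neg_one_sq, one_pow, Nat.cast_mul, Nat.cast_two, mul_pow,
      mul_assoc, mul_left_comm (2 : ℝ) (k : ℝ) θ]
    ring
  · intro n hn
    rcases n.even_or_odd' with ⟨k, rfl | rfl⟩
    · exact mem_range_self k
    · simp [pow_succ] at hn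

lemma tsum_eq_add_tsum_mod_three {R : Type*} [AddCommGroup R] [UniformSpace R]
    [IsUniformAddGroup R] [CompleteSpace R] [T0Space R] {f : ℕ → R} (hf : Summable f) :
    ∑' n, f n = ∑' k, f (3 * k) + ∑' k, f (3 * k + 1) + ∑' k, f (3 * k + 2) := by
  have h : ∑' n, f n = ∑ j : Fin 3, ∑' k, f (j.val + 3 * k) := Nat.sumByResidueClasses hf 3
  simpa [Fin.sum_univ_three, add_comm] using h

lemma tsum_one_div_three_mul_add_two_sq :
    ∑' k : ℕ, 1 / (3 * (k : ℝ) + 2) ^ 2 =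
      4 * π ^ 2 / 27 - ∑' k : ℕ, 1 / (3 * (k : ℝ) + 1) ^ 2 := by
  have hmultiples : ∑' k : ℕ, 1 / (3 * (k : ℝ)) ^ 2 = π ^ 2 / 6 / 9 := by
    rw [← hasSum_zeta_two.tsum_eq, ← tsum_div_const]
    exact tsum_congr fun k ↦ by ring
  have hsplit := tsum_eq_add_tsum_mod_three hasSum_zeta_two.summable
  rw [hasSum_zeta_two.tsum_eq] at hsplit
  push_cast at hsplit
  linarith

lemma clausen_two_pi_div_three :
    clausen (2 * (π / 3)) = √3 * ∑' k : ℕ, 1 / (3 * (k : ℝ) + 1) ^ 2 - 2 * √3 * π ^ 2 / 27 := by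
  have hperiod (k : ℕ) (a : ℝ) :
      sin ((3 * k + a) * (2 * (π / 3))) = sin (a * (2 * (π / 3))) := by
    rw [← sin_add_nat_mul_two_pi (a * (2 * (π / 3))) k]
    ring_nf
  have hsin₀ (k : ℕ) : sin (3 * k * (2 * (π / 3))) = 0 := by
    simpa using hperiod k 0
  have hsin₁ (k : ℕ) : sin ((3 * k + 1) * (2 * (π / 3))) = √3 / 2 := by
    rw [hperiod, ← sin_pi_div_three, ← sin_pi_sub (π / 3)]
    ring_nf
  have hsin₂ (k : ℕ) : sin ((3 * k + 2) * (2 * (π / 3))) = -(√3 / 2) := by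
    rw [hperiod, ← sin_pi_div_three, ← sin_add_pi]
    ring_nf
  rw [clausen, tsum_eq_add_tsum_mod_three (summable_sin_div_sq _)]
  push_cast
  simp_rw [hsin₀, hsin₁, hsin₂, div_eq_mul_one_div (√3 / 2), div_eq_mul_one_div (-(√3 / 2)),
    tsum_mul_left, tsum_one_div_three_mul_add_two_sq, zero_div, tsum_zero]
  ring

lemma clausen_pi_div_three :
    clausen (π / 3) =
      9 / (2 * √3) * ∑' k : ℕ, 1 / (3 * (k : ℝ) + 1) ^ 2 - π ^ 2 / (3 * √3) := by
  have hdup := clausen_sub_clausen_pi_sub (π / 3)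
  rw [show π - π / 3 = 2 * (π / 3) by ring, clausen_two_pi_div_three] at hdup
  rw [eq_add_of_sub_eq hdup]
  have hsqrt : √3 ^ 2 = 3 := sq_sqrt (by norm_num)
  field_simp
  rw [hsqrt]
  ring

lemma poch_cube_div_mul_pow_mul (n : ℕ) (s : ℝ) :
    poch (1 / 2) n ^ 3 / (poch (3 / 2) n ^ 2 * n.factorial) * (s ^ 2) ^ n * s =
      arcsinCoeff n * s ^ (2 * n + 1) / (2 * n + 1) := by
  have hratio : poch (3 / 2) n = poch (1 / 2) n * (2 * n + 1) := by
    have h := mul_poch_add_one (1 / 2) n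
    norm_num at h
    linarith
  have := (poch_pos one_half_pos n).ne'
  rw [hratio, arcsinCoeff]
  field_simp
  ring

lemma tsum_poch_cube_div_mul_sin_sq_pow_mul_sin {x : ℝ} (h₀ : 0 ≤ x) (h₁ : x ≤ π / 2) :
    (∑' n : ℕ, poch (1 / 2) n ^ 3 / (poch (3 / 2) n ^ 2 * n.factorial) * (sin x ^ 2) ^ n) * sin x =
      x * log (2 * sin x) + clausen (2 * x) / 2 := by
  rw [← tsum_mul_right, tsum_congr fun n ↦ poch_cube_div_mul_pow_mul n (sin x),
    tsum_arcsinCoeff_mul_sin_pow_div h₀ h₁, clausen_two_mul_eq_neg_integral]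
  ring

/-- `₃F₂(1/2, 1/2, 1/2; 3/2, 3/2; 1/4) = (1/(2√3))·ψ′(1/3) − π²/(3√3)`,
where `ψ′(1/3) = 9·∑_{k≥0} 1/(3k+1)²`. -/
theorem threeF_two_quarter :
    ∑' n : ℕ, (poch (1/2) n)^3 / ((poch (3/2) n)^2 * (n.factorial : ℝ)) * (1/4 : ℝ)^n
      = (9 / (2 * Real.sqrt 3)) * (∑' k : ℕ, 1 / (3 * (k : ℝ) + 1)^2)
        - π^2 / (3 * Real.sqrt 3) := by
  have h := tsum_poch_cube_div_mul_sin_sq_pow_mul_sin (x := π / 6)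
    (by linarith [pi_pos]) (by linarith [pi_pos])
  rw [sin_pi_div_six, show ((1 : ℝ) / 2) ^ 2 = 1 / 4 by norm_num,
    mul_one_div_cancel two_ne_zero, log_one, show 2 * (π / 6) = π / 3 by ring] at h
  rw [← clausen_pi_div_three]
  linarith
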